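/- Let P, Q ∈ R[y] with deg P = p ≥ 1 over a real closed field R. Knowing the signs of all principal minors of the Hermite matrices Her(P;A) for all polynomials A that are products of at most bit(p) of the derivatives P', P'', …, P^{(p−1)} each raised to the power 1 or 2, optionally multiplied by Q or Q², determines the Thom encoding of each real root of P and the sign of Q at each such root. -/

import Mathlib

open Polynomial

/-- The sign of a real number as an integer. -/
noncomputable def sgn (a : ℝ) : ℤ := if a < 0 then -1 else if a = 0 then 0 else 1

/-- The bit-length function: `bit 0 = 1` and, for `p ≥ 1`, `bit p = k` iff `2^{k-1} ≤ p < 2^k`. -/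
def bit (p : ℕ) : ℕ := if p = 0 then 1 else Nat.log 2 p + 1

/-- The `p × p` Hermite matrix of `P` and `A`: its `(j₁, j₂)` entry (zero-based) is the trace of
multiplication by `A·y^{j₁+j₂}` on `ℝ[y]/(P)`. -/
noncomputable def HerMat (p : ℕ) (P A : Polynomial ℝ) : Matrix (Fin p) (Fin p) ℝ :=
  fun j₁ j₂ =>
    LinearMap.trace ℝ (AdjoinRoot P)
      (LinearMap.mulLeft ℝ (AdjoinRoot.mk P (A * X ^ (j₁.val + j₂.val))))

/-- The principal minor of size `m` of a `p × p` matrix (determinant of the top-left `m × m`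
submatrix). -/
noncomputable def pMinor (p : ℕ) (M : Matrix (Fin p) (Fin p) ℝ) (m : ℕ) (h : m ≤ p) : ℝ :=
  (M.submatrix (Fin.castLE h) (Fin.castLE h)).det

/-- The product `Π_{1≤h≤p-1} (P^{(h)})^{α h} · Q^b`. -/
noncomputable def pderProd (p : ℕ) (P Q : Polynomial ℝ) (α : ℕ → ℕ) (b : ℕ) : Polynomial ℝ :=
  (∏ h ∈ Finset.Icc 1 (p - 1), (Polynomial.derivative^[h] P) ^ (α h)) * Q ^ b

/-- Admissible exponent data: each derivative appears with power `0`, `1` or `2`, `Q` appears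
with power `0`, `1` or `2`, and in total at most `bit p` of the polynomials
`P', …, P^{(p-1)}, Q` occur. -/
def admissible (p : ℕ) (α : ℕ → ℕ) (b : ℕ) : Prop :=
  (∀ h, α h ≤ 2) ∧ b ≤ 2 ∧
    ((Finset.Icc 1 (p - 1)).filter (fun h => α h ≠ 0)).card + (if b = 0 then 0 else 1) ≤ bit p

/-!
The form `(f, g) ↦ Tr (A f g)` on `ℝ[y] / (P)` is the sum over the complex roots `z` of `P` of
`mult(z) A(z) f(z) g(z)`. A pair of conjugate roots contributes a hyperbolic plane, so the
signature is the Tarski query of `P` and `A`: the sum of the signs of `A` at the distinct real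
roots of `P` (Hermite).

In the basis of monomials the matrix of the form is Hankel, and the signs of the leading principal
minors of a Hankel matrix determine its signature even when some of them vanish (Frobenius). Let
`i < n` be consecutive sizes with a nonzero minor, and let `P` be the monic polynomial of degree `i`
orthogonal to the polynomials of degree less than `i`. Since the minors between `i` and `n` vanish,
`P` is orthogonal to all polynomials of degree less than `n - 1`. A semidefinite subspace in degree
less than `i` therefore stays semidefinite after adding the multiples of `P` by polynomials of
degree less than `(n - i) / 2`, so both indices of inertia grow by at least `⌊(n - i) / 2⌋`; the
parity of the negative one is read off the sign of the minor of size `n`.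

The Tarski queries of products of powers of given polynomials are the moments of the weight that
counts, for each sign vector, the roots realizing it; the difference of two such weights is
supported on at most `2 p` sign vectors. A weight with a support of size `N` vanishes as soon as
its moments with at most `log₂ N` nonzero exponents do: by induction, summing out the first
coordinate gives zero, so a tail with a single extension in the support has no weight, and nonzero
exponents of the first coordinate are needed only for the remaining tails, of which there are at
most `N / 2`. Finally `⌊log₂ (2 p)⌋ = bit p`.
-/

section Trace

variable {n K : Type*} [Fintype n] [DecidableEq n] [Field K]

theorem det_aeval_eq_prod_roots_charpoly [IsAlgClosed K] (M : Matrix n n K) (q : K[X]) :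
    (aeval M q).det = (M.charpoly.roots.map q.eval).prod := by
  have hM := IsAlgClosed.splits M.charpoly
  have hcard : M.charpoly.roots.card = Fintype.card n := by
    rw [← hM.natDegree_eq_card_roots, M.charpoly_natDegree_eq_dim]
  induction IsAlgClosed.splits q using Submonoid.closure_induction with
  | mem f hf =>
    obtain ⟨c, rfl⟩ | ⟨c, rfl⟩ := hf
    · simp [Matrix.algebraMap_eq_diagonal, hcard]
    · have hneg : aeval M (X + C c) = -(Matrix.scalar n (-c) - M) := by
        rw [map_neg, neg_sub, sub_neg_eq_add]
        simp [Matrix.algebraMap_eq_diagonal, Pi.algebraMap_def]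
      have hmap : M.charpoly.roots.map (X + C c).eval =
          (M.charpoly.roots.map (-c - ·)).map Neg.neg := by
        simp [Multiset.map_map]
      rw [hneg, Matrix.det_neg, ← Matrix.eval_charpoly,
        hM.eval_eq_prod_roots_of_monic M.charpoly_monic, hmap, Multiset.prod_map_neg,
        Multiset.card_map, hcard]
  | one => simp
  | mul f g _ _ hf hg => simp [Multiset.prod_map_mul, hf, hg]

theorem roots_charpoly_aeval [IsAlgClosed K] (M : Matrix n n K) (g : K[X]) :
    (aeval M g).charpoly.roots = M.charpoly.roots.map g.eval := by
  suffices h : (aeval M g).charpoly = ((M.charpoly.roots.map g.eval).map (X - C ·)).prod by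
    rw [h, roots_multiset_prod_X_sub_C]
  refine Polynomial.funext fun t => ?_
  have hdet := det_aeval_eq_prod_roots_charpoly M (C t - g)
  rw [Matrix.eval_charpoly, eval_multiset_prod]
  simpa [Function.comp_def, Matrix.algebraMap_eq_diagonal, Pi.algebraMap_def] using hdet

theorem algebraMap_trace_adjoinRoot_mk {F : Type*} [Field F] [IsAlgClosed F] [Algebra K F]
    {P : K[X]} (hP : P ≠ 0) (g : K[X]) :
    algebraMap K F (Algebra.trace K (AdjoinRoot P) (AdjoinRoot.mk P g)) =
      ((P.aroots F).map (aeval · g)).sum := by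
  set pb := AdjoinRoot.powerBasis hP
  let φ : AdjoinRoot P →ₐ[K] Matrix (Fin pb.dim) (Fin pb.dim) F :=
    (Algebra.ofId K F).mapMatrix.comp (Algebra.leftMulMatrix pb.basis)
  have htrace (x : AdjoinRoot P) : (φ x).trace = algebraMap K F (Algebra.trace K _ x) := by
    rw [Algebra.trace_eq_matrix_trace pb.basis]
    exact (AddMonoidHom.map_trace (algebraMap K F) _).symm
  have hroots : (φ pb.gen).charpoly.roots = P.aroots F := by
    have hmin : minpoly K pb.gen = C P.leadingCoeff⁻¹ * P := by
      simpa [pb, mul_comm] using AdjoinRoot.minpoly_root hP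
    have hcharpoly : (φ pb.gen).charpoly = (minpoly K pb.gen).map (algebraMap K F) := by
      rw [← charpoly_leftMulMatrix]
      exact Matrix.charpoly_map _ (algebraMap K F)
    rw [hcharpoly, hmin]
    exact aroots_C_mul P (by simpa using hP)
  have hmk : AdjoinRoot.mk P g = aeval pb.gen g := by simp [pb, AdjoinRoot.aeval_eq]
  rw [← htrace, hmk, ← aeval_algHom_apply, ← aeval_map_algebraMap F,
    Matrix.trace_eq_sum_roots_charpoly, roots_charpoly_aeval, hroots]
  simp [eval_map_algebraMap]

end Trace

section SignVectors

open scoped Finset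

/-- The moment of exponent `α` of a weight `w` on sign vectors. -/
def signMoment {R : Type*} [CommRing R] {j : ℕ} (w : (Fin j → SignType) → R) (α : Fin j → ℕ) : R :=
  ∑ x, w x * ∏ i, (x i : R) ^ α i

/-- The moment of exponent `k` in the first coordinate alone, as a weight on the remaining
coordinates. -/
def headMoment {R : Type*} [CommRing R] {j : ℕ} (k : ℕ) (w : (Fin (j + 1) → SignType) → R)
    (y : Fin j → SignType) : R :=
  ∑ a : SignType, (a : R) ^ k * w (Fin.cons a y)

variable {R : Type*} [CommRing R] {j : ℕ}

theorem signMoment_headMoment (k : ℕ) (w : (Fin (j + 1) → SignType) → R) (α : Fin j → ℕ) :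
    signMoment (headMoment k w) α = signMoment w (Fin.cons k α) := by
  unfold signMoment headMoment
  rw [← (Fin.consEquiv fun _ => SignType).sum_comp, Fintype.sum_prod_type, Finset.sum_comm]
  refine Finset.sum_congr rfl fun y _ => ?_
  rw [Finset.sum_mul]
  refine Finset.sum_congr rfl fun a _ => ?_
  simp only [Fin.consEquiv, Equiv.coe_fn_mk, Fin.prod_univ_succ, Fin.cons_zero, Fin.cons_succ]
  ring

theorem eq_zero_of_headMoment_eq_zero [NoZeroDivisors R] [NeZero (2 : R)]
    {w : (Fin (j + 1) → SignType) → R} (h : ∀ k ≤ 2, headMoment k w = 0) : w = 0 := by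
  have sum_signs (f : SignType → R) : ∑ a, f a = f 0 + f (-1) + f 1 := by
    rw [SignType.univ_eq]; simp [add_assoc]
  ext x
  rw [← Fin.cons_self_tail x]
  have h₀ := congrFun (h 0 (by norm_num)) (Fin.tail x)
  have h₁ := congrFun (h 1 (by norm_num)) (Fin.tail x)
  have h₂ := congrFun (h 2 le_rfl) (Fin.tail x)
  simp only [headMoment, sum_signs, Pi.zero_apply, pow_zero, one_mul, pow_one, SignType.coe_zero,
    zero_mul, SignType.coe_neg, SignType.coe_one, neg_mul, zero_add, ne_eq, OfNat.ofNat_ne_zero,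
    not_false_eq_true, zero_pow, even_two, Even.neg_pow, one_pow] at h₀ h₁ h₂
  have hpos : w (Fin.cons 1 (Fin.tail x)) = 0 := by
    refine (mul_eq_zero.mp ?_).resolve_left (two_ne_zero (α := R))
    linear_combination h₁ + h₂
  have hneg : w (Fin.cons (-1) (Fin.tail x)) = 0 := by linear_combination h₂ - hpos
  have hzero : w (Fin.cons 0 (Fin.tail x)) = 0 := by linear_combination h₀ - hpos - hneg
  cases x 0 <;> assumption

theorem two_mul_card_one_lt_card_fiber_le {ι κ : Type*} [Fintype κ] [DecidableEq κ]
    (s : Finset ι) (f : ι → κ) : 2 * #{y | 1 < #{x ∈ s | f x = y}} ≤ #s := by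
  calc 2 * #{y | 1 < #{x ∈ s | f x = y}}
      ≤ ∑ y with 1 < #{x ∈ s | f x = y}, #{x ∈ s | f x = y} := by
        rw [mul_comm, ← smul_eq_mul]
        exact Finset.card_nsmul_le_sum _ _ _ fun y hy => (Finset.mem_filter.mp hy).2
    _ ≤ ∑ y, #{x ∈ s | f x = y} := Finset.sum_le_sum_of_subset (Finset.filter_subset _ _)
    _ = #s := (Finset.card_eq_sum_card_fiberwise fun _ _ => by simp).symm

theorem card_filter_cons_ne_zero (k : ℕ) (α : Fin j → ℕ) :
    #{i | (Fin.cons k α : Fin (j + 1) → ℕ) i ≠ 0} =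
      #{i | α i ≠ 0} + if k = 0 then 0 else 1 := by
  rw [Fin.card_filter_univ_succ]
  by_cases hk : k = 0 <;> simp [hk]

theorem apply_cons_eq_zero_of_headMoment_zero_eq_zero {w : (Fin (j + 1) → SignType) → R}
    {T : Finset (Fin (j + 1) → SignType)} (hT : ∀ x ∉ T, w x = 0) (hw : headMoment 0 w = 0)
    {y : Fin j → SignType} (hy : #{x ∈ T | Fin.tail x = y} ≤ 1) (a : SignType) :
    w (Fin.cons a y) = 0 := by
  by_contra hne
  have mem_fiber {b : SignType} (hb : w (Fin.cons b y) ≠ 0) :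
      Fin.cons b y ∈ {x ∈ T | Fin.tail x = y} :=
    Finset.mem_filter.mpr ⟨by_contra fun hb' => hb (hT _ hb'), Fin.tail_cons _ _⟩
  have hzero (b : SignType) (hba : b ≠ a) : w (Fin.cons b y) = 0 := by
    by_contra hb
    have heq := Finset.card_le_one.mp hy _ (mem_fiber hb) _ (mem_fiber hne)
    exact hba (Fin.cons_inj.mp heq).1
  have hsum := congrFun hw y
  rw [headMoment, Finset.sum_eq_single a (by simp +contextual [hzero]) (by simp)] at hsum
  exact hne (by simpa using hsum)

theorem eq_zero_of_signMoment_eq_zero [NoZeroDivisors R] [NeZero (2 : R)]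
    {w : (Fin j → SignType) → R} (T : Finset (Fin j → SignType)) (hT : ∀ x ∉ T, w x = 0)
    (hw : ∀ α : Fin j → ℕ, (∀ i, α i ≤ 2) →
      2 ^ #{i | α i ≠ 0} ≤ #T → signMoment w α = 0) :
    w = 0 := by
  induction j with
  | zero =>
    ext x
    by_cases hx : x ∈ T
    · have h := hw 0 (by simp) (by simpa using Finset.card_pos.mpr ⟨x, hx⟩)
      rwa [signMoment, Fintype.sum_subsingleton _ x, Fin.prod_univ_zero, mul_one] at h
    · exact hT x hx
  | succ j ih =>
    have le_two {k : ℕ} {α : Fin j → ℕ} (hk : k ≤ 2) (hα : ∀ i, α i ≤ 2) :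
        ∀ i, (Fin.cons k α : Fin (j + 1) → ℕ) i ≤ 2 := Fin.forall_fin_succ.mpr ⟨hk, hα⟩
    have hmoment₀ : headMoment 0 w = 0 := by
      refine ih (T.image Fin.tail) (fun y hy => Finset.sum_eq_zero fun a _ => ?_)
        fun α hα hcard => ?_
      · rw [hT, mul_zero]
        exact fun hmem => hy (Finset.mem_image.mpr ⟨_, hmem, Fin.tail_cons _ _⟩)
      · rw [signMoment_headMoment]
        refine hw _ (le_two (by norm_num) hα) ?_
        rw [card_filter_cons_ne_zero, if_pos rfl]
        exact hcard.trans Finset.card_image_le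
    let U : Finset (Fin j → SignType) := {y | 1 < #{x ∈ T | Fin.tail x = y}}
    have hU : 2 * #U ≤ #T := two_mul_card_one_lt_card_fiber_le T _
    have hw_cons (a : SignType) {y : Fin j → SignType} (hy : y ∉ U) : w (Fin.cons a y) = 0 :=
      apply_cons_eq_zero_of_headMoment_zero_eq_zero hT hmoment₀ (by simpa [U] using hy) a
    refine eq_zero_of_headMoment_eq_zero fun k hk => ?_
    obtain rfl | hk₀ := eq_or_ne k 0
    · exact hmoment₀
    refine ih U (fun y hy => Finset.sum_eq_zero fun a _ => by rw [hw_cons a hy, mul_zero])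
      fun α hα hcard => ?_
    rw [signMoment_headMoment]
    refine hw _ (le_two hk hα) ?_
    rw [card_filter_cons_ne_zero, if_neg hk₀, pow_succ']
    lia

theorem sum_card_fiber_mul {S ι κ : Type*} [NonAssocSemiring S] [Fintype κ] [DecidableEq κ]
    (s : Finset ι) (f : ι → κ) (g : κ → S) :
    ∑ y, (#{x ∈ s | f x = y} : S) * g y = ∑ x ∈ s, g (f x) := by
  simp only [← Finset.sum_fiberwise' s f g, Finset.sum_const, nsmul_eq_mul]

theorem image_eq_image_of_sum_prod_sign_eq {ι κ : Type*} (s : Finset ι) (t : Finset κ)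
    (σ : ι → Fin j → SignType) (τ : κ → Fin j → SignType)
    (h : ∀ α : Fin j → ℕ, (∀ i, α i ≤ 2) →
      2 ^ #{i | α i ≠ 0} ≤ #s + #t →
      ∑ x ∈ s, ∏ i, (σ x i : ℤ) ^ α i = ∑ y ∈ t, ∏ i, (τ y i : ℤ) ^ α i) :
    s.image σ = t.image τ := by
  let w (x : Fin j → SignType) : ℤ := #{i ∈ s | σ i = x} - #{i ∈ t | τ i = x}
  have hmoment (α : Fin j → ℕ) : signMoment w α =
      ∑ x ∈ s, ∏ i, (σ x i : ℤ) ^ α i - ∑ y ∈ t, ∏ i, (τ y i : ℤ) ^ α i := by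
    simp only [signMoment, w, sub_mul, Finset.sum_sub_distrib, sum_card_fiber_mul]
  have hw : w = 0 := by
    refine eq_zero_of_signMoment_eq_zero (s.image σ ∪ t.image τ) (fun x hx => ?_)
      fun α hα hcard => ?_
    · simp only [Finset.mem_union, Finset.mem_image, not_or, not_exists, not_and] at hx
      simp [w, Finset.filter_eq_empty_iff.mpr (hx.1 · ·), Finset.filter_eq_empty_iff.mpr (hx.2 · ·)]
    · rw [hmoment, sub_eq_zero]
      refine h α hα (hcard.trans ((Finset.card_union_le _ _).trans ?_))
      gcongr <;> exact Finset.card_image_le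
  ext x
  have hcard : #{i ∈ s | σ i = x} = #{i ∈ t | τ i = x} := by
    exact_mod_cast sub_eq_zero.mp (congrFun hw x)
  simp only [← Finset.fiber_nonempty_iff_mem_image, ← Finset.card_pos, hcard]

end SignVectors

section Signature

theorem nondegenerate_toQuadraticMap {𝕜 V : Type*} [Field 𝕜] [NeZero (2 : 𝕜)] [AddCommGroup V]
    [Module 𝕜 V] {B : LinearMap.BilinForm 𝕜 V} (hB : LinearMap.IsSymm B)
    (hB' : B.Nondegenerate) : B.toQuadraticMap.Nondegenerate := by
  have : Invertible (2 : 𝕜) := invertibleOfNonzero two_ne_zero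
  rw [← QuadraticMap.nondegenerate_associated_iff, QuadraticMap.associated_left_inverse _ hB.eq]
  exact hB'

variable {𝕜 V : Type*} [Field 𝕜] [LinearOrder 𝕜] [IsStrictOrderedRing 𝕜]

theorem sign_prod_eq_neg_one_pow {ι : Type*} [Fintype ι] {w : ι → 𝕜} (hw : ∀ i, w i ≠ 0) :
    SignType.sign (∏ i, w i) = (-1) ^ {i | w i < 0}.ncard := by
  classical
  have hsign (i : ι) : SignType.sign (w i) = if w i < 0 then -1 else 1 := by
    rcases (hw i).lt_or_gt with h | h
    · simp [h]
    · simp [h, h.not_gt]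
  rw [← signHom_apply, map_prod, Set.ncard_eq_toFinset_card']
  simp [signHom_apply, hsign, Finset.prod_ite]

variable [AddCommGroup V] [Module 𝕜 V]

theorem sigPos_sub_sigNeg_of_equivalent_weightedSumSquares {ι : Type*} [Fintype ι]
    {Q : QuadraticForm 𝕜 V} {w : ι → 𝕜}
    (h : Q.Equivalent (QuadraticMap.weightedSumSquares 𝕜 w)) :
    (sigPos Q : ℤ) - sigNeg Q = ∑ i, (SignType.sign (w i) : ℤ) := by
  classical
  have hsign (i : ι) : (SignType.sign (w i) : ℤ) =
      (if 0 < w i then 1 else 0) - if w i < 0 then 1 else 0 := by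
    rcases lt_trichotomy (w i) 0 with hi | hi | hi <;> simp [hi, hi.not_gt]
  rw [QuadraticForm.sigPos_of_equiv_weightedSumSquares h,
    QuadraticForm.sigNeg_of_equiv_weightedSumSquares h, Set.ncard_eq_toFinset_card',
    Set.ncard_eq_toFinset_card']
  simp [hsign]

theorem sign_det_toMatrix_eq_neg_one_pow_sigNeg {ι : Type*} [Fintype ι] [DecidableEq ι]
    {B : LinearMap.BilinForm 𝕜 V} (hB : LinearMap.IsSymm B) (hB' : B.Nondegenerate)
    (b : Module.Basis ι 𝕜 V) :
    SignType.sign (LinearMap.BilinForm.toMatrix b B).det = (-1) ^ sigNeg B.toQuadraticMap := by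
  have : Invertible (2 : 𝕜) := invertibleOfNonzero two_ne_zero
  have : FiniteDimensional 𝕜 V := b.finiteDimensional_of_finite
  obtain ⟨v₀, hv₀⟩ := LinearMap.BilinForm.exists_orthogonal_basis hB
  let v := v₀.reindex (v₀.indexEquiv b)
  have hv : B.IsOrthoᵢ v := fun i j hij => by
    simpa [v, Function.onFun] using hv₀ ((v₀.indexEquiv b).symm.injective.ne hij)
  have hdiag : LinearMap.BilinForm.toMatrix v B = .diagonal fun i => B (v i) (v i) := by
    ext i j
    rw [LinearMap.BilinForm.toMatrix_apply, Matrix.diagonal_apply]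
    split_ifs with hij
    · rw [hij]
    · exact hv hij
  have hsig : sigNeg B.toQuadraticMap = {i | B (v i) (v i) < 0}.ncard := by
    have hassoc : QuadraticMap.associated (R := 𝕜) B.toQuadraticMap = B :=
      QuadraticMap.associated_left_inverse _ hB.eq
    have hrepr := QuadraticMap.basisRepr_eq_of_iIsOrtho B.toQuadraticMap v (by rwa [hassoc])
    exact QuadraticForm.sigNeg_of_equiv_weightedSumSquares
      (hrepr ▸ ⟨QuadraticMap.isometryEquivBasisRepr B.toQuadraticMap v⟩)
  have hdet : (LinearMap.BilinForm.toMatrix b B).det =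
      (v.toMatrix b).det ^ 2 * ∏ i, B (v i) (v i) := by
    rw [← LinearMap.BilinForm.toMatrix_mul_basis_toMatrix v b B, hdiag]
    simp only [Matrix.det_mul, Matrix.det_transpose, Matrix.det_diagonal]
    ring
  have hne : (LinearMap.BilinForm.toMatrix b B).det ≠ 0 :=
    (LinearMap.BilinForm.nondegenerate_iff_det_ne_zero b).mp hB'
  rw [hdet] at hne ⊢
  have hprod := Finset.prod_ne_zero_iff.mp (right_ne_zero_of_mul hne)
  rw [sign_mul, sign_pos ((sq_nonneg _).lt_of_ne' (left_ne_zero_of_mul hne)), one_mul, hsig,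
    sign_prod_eq_neg_one_pow fun i => hprod i (Finset.mem_univ i)]

variable [FiniteDimensional 𝕜 V]

theorem sigPos_add_sigNeg_of_nondegenerate {Q : QuadraticForm 𝕜 V} (hQ : Q.Nondegenerate) :
    sigPos Q + sigNeg Q = Module.finrank 𝕜 V := by
  have h := QuadraticForm.sigPos_add_sigNeg_add_radical (Q := Q)
  rwa [hQ.radical_eq_bot, finrank_bot, add_zero] at h

theorem finrank_le_sigPos_of_nonneg {Q : QuadraticForm 𝕜 V} (hQ : Q.Nondegenerate)
    {W : Submodule 𝕜 V} (hW : ∀ x ∈ W, 0 ≤ Q x) : Module.finrank 𝕜 W ≤ sigPos Q := by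
  have h := QuadraticForm.sigPos_add_finrank_le_of_nonpos (Q := -Q) (V := W)
    (fun x hx => by simpa using hW x hx)
  rw [sigPos_neg] at h
  have := sigPos_add_sigNeg_of_nondegenerate hQ
  lia

end Signature

section Hankel

variable {𝕜 : Type*} [Field 𝕜]

/-- The Hankel form of a linear functional `L`: the bilinear form `(f, g) ↦ L (f * g)` on the
polynomials of degree less than `n`. -/
noncomputable def hankelForm (L : 𝕜[X] →ₗ[𝕜] 𝕜) (n : ℕ) : LinearMap.BilinForm 𝕜 (degreeLT 𝕜 n) :=
  LinearMap.BilinForm.restrict ((LinearMap.mul 𝕜 𝕜[X]).compr₂ L) (degreeLT 𝕜 n)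

/-- The Hankel matrix of the first `2 * n - 1` moments `L (X ^ k)` of a linear functional `L`. -/
noncomputable def hankelMatrix (L : 𝕜[X] →ₗ[𝕜] 𝕜) (n : ℕ) : Matrix (Fin n) (Fin n) 𝕜 :=
  .of fun i j => L (X ^ (i.val + j.val))

variable {L : 𝕜[X] →ₗ[𝕜] 𝕜} {n : ℕ}

theorem hankelForm_apply (f g : degreeLT 𝕜 n) : hankelForm L n f g = L (f * g) := rfl

theorem isSymm_hankelForm : LinearMap.IsSymm (hankelForm L n) :=
  ⟨fun f g => by simp [hankelForm_apply, mul_comm]⟩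

theorem toMatrix_hankelForm :
    LinearMap.BilinForm.toMatrix (degreeLT.basis 𝕜 n) (hankelForm L n) = hankelMatrix L n := by
  ext i j
  simp [LinearMap.BilinForm.toMatrix_apply, hankelForm_apply, hankelMatrix, pow_add]

theorem nondegenerate_hankelForm_iff_det_ne_zero :
    (hankelForm L n).Nondegenerate ↔ (hankelMatrix L n).det ≠ 0 := by
  rw [LinearMap.BilinForm.nondegenerate_iff_det_ne_zero (degreeLT.basis 𝕜 n), toMatrix_hankelForm]

theorem nondegenerate_hankelForm_iff :
    (hankelForm L n).Nondegenerate ↔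
      ∀ f ∈ degreeLT 𝕜 n, (∀ g ∈ degreeLT 𝕜 n, L (f * g) = 0) → f = 0 := by
  refine isSymm_hankelForm.isRefl.nondegenerate_iff_separatingLeft.trans ?_
  simp [LinearMap.SeparatingLeft, hankelForm_apply]

theorem exists_lt_nondegenerate_hankelForm (hn : 0 < n) :
    ∃ i < n, (hankelForm L i).Nondegenerate ∧
      ∀ m, i < m → m < n → ¬ (hankelForm L m).Nondegenerate := by
  classical
  let p (m : ℕ) : Prop := (hankelForm L m).Nondegenerate
  have h₀ : p 0 := nondegenerate_hankelForm_iff_det_ne_zero.mpr (by simp)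
  have hle : Nat.findGreatest p (n - 1) ≤ n - 1 := Nat.findGreatest_le _
  exact ⟨Nat.findGreatest p (n - 1), by lia, Nat.findGreatest_spec (Nat.zero_le _) h₀,
    fun m hm hmn => Nat.findGreatest_is_greatest hm (by lia)⟩

theorem mem_degreeLT_succ {R : Type*} [Semiring R] {f : R[X]} :
    f ∈ degreeLT R (n + 1) ↔ f.natDegree ≤ n := by
  rw [degreeLT_succ_eq_degreeLE, mem_degreeLE, natDegree_le_iff_degree_le]

theorem mul_mem_degreeLT {R : Type*} [Semiring R] {f g : R[X]} {a b : ℕ} (hf : f ∈ degreeLT R a)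
    (hg : g ∈ degreeLT R b) (hab : a + b ≤ n + 1) : f * g ∈ degreeLT R n := by
  rcases eq_or_ne f 0 with rfl | hf₀
  · simp
  rcases eq_or_ne g 0 with rfl | hg₀
  · simp
  rw [mem_degreeLT, ← natDegree_lt_iff_degree_lt ‹_›] at hf hg
  refine mem_degreeLT.mpr (degree_le_natDegree.trans_lt ?_)
  have := natDegree_mul_le (p := f) (q := g)
  norm_cast
  lia

theorem exists_monic_natDegree_eq_orthogonal_degreeLT (hL : (hankelForm L n).Nondegenerate) :
    ∃ P : 𝕜[X], P.Monic ∧ P.natDegree = n ∧ ∀ f ∈ degreeLT 𝕜 n, L (P * f) = 0 := by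
  let ℓ : Module.Dual 𝕜 (degreeLT 𝕜 n) := (L ∘ₗ LinearMap.mulLeft 𝕜 (X ^ n)).domRestrict _
  obtain ⟨h, hh⟩ := ((hankelForm L n).toDual hL).surjective ℓ
  have hdeg : (h : 𝕜[X]).degree < n := mem_degreeLT.mp h.2
  refine ⟨X ^ n - (h : 𝕜[X]), monic_X_pow_sub hdeg, ?_, fun f hf => ?_⟩
  · rw [natDegree_eq_of_degree_eq_some]
    rw [degree_sub_eq_left_of_degree_lt, degree_X_pow]
    rwa [degree_X_pow]
  · rw [sub_mul, map_sub, sub_eq_zero]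
    exact (LinearMap.congr_fun hh ⟨f, hf⟩).symm

theorem apply_mul_eq_coeff_mul {P g : 𝕜[X]} (hP : ∀ f ∈ degreeLT 𝕜 n, L (P * f) = 0)
    (hg : g ∈ degreeLT 𝕜 (n + 1)) : L (P * g) = g.coeff n * L (P * X ^ n) := by
  have hlt : g - C (g.coeff n) * X ^ n ∈ degreeLT 𝕜 n := by
    rw [mem_degreeLT, degree_lt_iff_coeff_zero] at hg ⊢
    intro m hm
    rcases hm.eq_or_lt with rfl | hm
    · simp
    · simp [coeff_X_pow, hg m hm, hm.ne']
  have h := hP _ hlt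
  rw [mul_sub, map_sub, sub_eq_zero] at h
  rw [h, mul_left_comm, ← smul_eq_C_mul, map_smul, smul_eq_mul]

theorem nondegenerate_hankelForm_succ {P : 𝕜[X]} (hP : P.Monic)
    (hL : (hankelForm L P.natDegree).Nondegenerate) (hn : P.natDegree ≤ n)
    (hPn : ∀ f ∈ degreeLT 𝕜 n, L (P * f) = 0) (hne : L (P * X ^ n) ≠ 0) :
    (hankelForm L (n + 1)).Nondegenerate := by
  rw [nondegenerate_hankelForm_iff] at hL ⊢
  intro f hf hfg
  set y := f /ₘ P
  have hdiv : f %ₘ P + P * y = f := modByMonic_add_div f P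
  have hydeg : y.natDegree ≤ n - P.natDegree := by
    rw [natDegree_divByMonic f hP]
    exact Nat.sub_le_sub_right (mem_degreeLT_succ.mp hf) _
  have hmod : f %ₘ P = 0 := by
    refine hL _ ?_ fun g hg => ?_
    · simpa only [mem_degreeLT, degree_eq_natDegree hP.ne_zero] using degree_modByMonic_lt f hP
    · have h := hfg g (degreeLT_mono (by lia) hg)
      have hyg : y * g ∈ degreeLT 𝕜 n :=
        mul_mem_degreeLT (mem_degreeLT_succ.mpr hydeg) hg (by lia)
      rwa [← hdiv, add_mul, map_add, mul_assoc, hPn _ hyg, add_zero] at h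
  rw [hmod, zero_add] at hdiv
  have hyX : y * X ^ (n - y.natDegree) ∈ degreeLT 𝕜 (n + 1) := by
    refine mem_degreeLT_succ.mpr (natDegree_mul_le.trans ?_)
    rw [natDegree_X_pow]
    lia
  have h := hfg (X ^ (n - y.natDegree))
    (mem_degreeLT_succ.mpr ((natDegree_X_pow_le _).trans (Nat.sub_le _ _)))
  rw [← hdiv, mul_assoc, apply_mul_eq_coeff_mul hPn hyX, coeff_mul_X_pow', if_pos (by lia),
    Nat.sub_sub_self (by lia)] at h
  have hy₀ : y = 0 := leadingCoeff_eq_zero.mp ((mul_eq_zero.mp h).resolve_right hne)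
  rw [← hdiv, hy₀, mul_zero]

theorem orthogonal_degreeLT_of_not_nondegenerate {P : 𝕜[X]} (hP : P.Monic)
    (hL : (hankelForm L P.natDegree).Nondegenerate)
    (hdeg : ∀ m, P.natDegree < m → m ≤ n → ¬ (hankelForm L m).Nondegenerate)
    (hn : P.natDegree ≤ n) (horth : ∀ f ∈ degreeLT 𝕜 P.natDegree, L (P * f) = 0) :
    ∀ f ∈ degreeLT 𝕜 n, L (P * f) = 0 := by
  induction n, hn using Nat.le_induction with
  | base => exact horth
  | succ n hn ih =>
    have hPn := ih fun m hm hmn => hdeg m hm (hmn.trans n.le_succ)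
    have hzero : L (P * X ^ n) = 0 := by
      by_contra hne
      exact hdeg (n + 1) (by lia) le_rfl (nondegenerate_hankelForm_succ hP hL hn hPn hne)
    intro f hf
    rw [apply_mul_eq_coeff_mul hPn hf, hzero, mul_zero]

end Hankel

section HankelSignature

variable {𝕜 : Type*} [Field 𝕜] [LinearOrder 𝕜] {L L' : 𝕜[X] →ₗ[𝕜] 𝕜} {i n : ℕ}

theorem nondegenerate_hankelForm_iff_of_sign_det_eq
    (hsign : SignType.sign (hankelMatrix L n).det = SignType.sign (hankelMatrix L' n).det) :
    (hankelForm L n).Nondegenerate ↔ (hankelForm L' n).Nondegenerate := by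
  rw [nondegenerate_hankelForm_iff_det_ne_zero, nondegenerate_hankelForm_iff_det_ne_zero,
    ← sign_ne_zero, hsign, sign_ne_zero]

variable [IsStrictOrderedRing 𝕜]

theorem sigPos_add_sigNeg_hankelForm (hL : (hankelForm L n).Nondegenerate) :
    sigPos (hankelForm L n).toQuadraticMap + sigNeg (hankelForm L n).toQuadraticMap = n := by
  rw [sigPos_add_sigNeg_of_nondegenerate (nondegenerate_toQuadraticMap isSymm_hankelForm hL),
    Module.finrank_eq_card_basis (degreeLT.basis 𝕜 n), Fintype.card_fin]

theorem sign_det_hankelMatrix (hL : (hankelForm L n).Nondegenerate) :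
    SignType.sign (hankelMatrix L n).det = (-1) ^ sigNeg (hankelForm L n).toQuadraticMap := by
  rw [← toMatrix_hankelForm, sign_det_toMatrix_eq_neg_one_pow_sigNeg isSymm_hankelForm hL]

theorem finrank_add_half_le_sigPos_hankelForm (hL : (hankelForm L n).Nondegenerate)
    {P : 𝕜[X]} (hP : P.Monic) (hPn : P.natDegree < n)
    (horth : ∀ f ∈ degreeLT 𝕜 (n - 1), L (P * f) = 0)
    {W : Submodule 𝕜 𝕜[X]} (hWdeg : W ≤ degreeLT 𝕜 P.natDegree) (hW : ∀ f ∈ W, 0 ≤ L (f * f)) :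
    Module.finrank 𝕜 W + (n - P.natDegree) / 2 ≤ sigPos (hankelForm L n).toQuadraticMap := by
  set k := (n - P.natDegree) / 2
  have : FiniteDimensional 𝕜 W := Submodule.finiteDimensional_of_le hWdeg
  let φ₀ : W × degreeLT 𝕜 k →ₗ[𝕜] 𝕜[X] :=
    W.subtype.coprod (LinearMap.mulLeft 𝕜 P ∘ₗ (degreeLT 𝕜 k).subtype)
  have hPdeg : P ∈ degreeLT 𝕜 (P.natDegree + 1) := mem_degreeLT_succ.mpr le_rfl
  have hφ₀_mem (x : W × degreeLT 𝕜 k) : φ₀ x ∈ degreeLT 𝕜 n :=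
    add_mem (degreeLT_mono hPn.le (hWdeg x.1.2)) (mul_mem_degreeLT hPdeg x.2.2 (by lia))
  let φ : W × degreeLT 𝕜 k →ₗ[𝕜] degreeLT 𝕜 n := φ₀.codRestrict _ hφ₀_mem
  have hφ : Function.Injective φ := by
    refine LinearMap.ker_eq_bot.mp (LinearMap.ker_eq_bot'.mpr fun ⟨v, y⟩ hvy => ?_)
    have hdeg : (v : 𝕜[X]).degree < P.degree := by
      simpa only [mem_degreeLT, degree_eq_natDegree hP.ne_zero] using hWdeg v.2
    obtain ⟨hdiv, hmod⟩ := div_modByMonic_unique (f := 0) (y : 𝕜[X]) (v : 𝕜[X]) hP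
      ⟨congrArg Subtype.val hvy, hdeg⟩
    rw [zero_divByMonic] at hdiv
    rw [zero_modByMonic] at hmod
    exact Prod.ext (Subtype.ext hmod.symm) (Subtype.ext hdiv.symm)
  -- As `P` is orthogonal to the cross terms, the form takes the value `L (v * v)` at `v + P * y`.
  have hnonneg (x : W × degreeLT 𝕜 k) : 0 ≤ L (φ₀ x * φ₀ x) := by
    obtain ⟨⟨v, hv⟩, ⟨y, hy⟩⟩ := x
    have horth' : L (P * ((v + v + P * y) * y)) = 0 := by
      have hv' := degreeLT_mono (Nat.le_add_right _ k) (hWdeg hv)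
      refine horth _ (mul_mem_degreeLT (a := P.natDegree + k) ?_ hy (by lia))
      exact add_mem (add_mem hv' hv') (mul_mem_degreeLT hPdeg hy (by lia))
    have hsq : (v + P * y) * (v + P * y) = v * v + P * ((v + v + P * y) * y) := by ring
    change 0 ≤ L ((v + P * y) * (v + P * y))
    rw [hsq, map_add, horth', add_zero]
    exact hW v hv
  calc Module.finrank 𝕜 W + k = Module.finrank 𝕜 (LinearMap.range φ) := by
        rw [LinearMap.finrank_range_of_inj hφ, Module.finrank_prod,
          Module.finrank_eq_card_basis (degreeLT.basis 𝕜 k), Fintype.card_fin]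
    _ ≤ sigPos (hankelForm L n).toQuadraticMap := by
        refine finrank_le_sigPos_of_nonneg (nondegenerate_toQuadraticMap isSymm_hankelForm hL) ?_
        rintro _ ⟨x, rfl⟩
        exact hnonneg x

theorem sigPos_hankelForm_add_half_le (hin : i < n) (hi : (hankelForm L i).Nondegenerate)
    (hn : (hankelForm L n).Nondegenerate)
    (hgap : ∀ m, i < m → m < n → ¬ (hankelForm L m).Nondegenerate) :
    sigPos (hankelForm L i).toQuadraticMap + (n - i) / 2 ≤
      sigPos (hankelForm L n).toQuadraticMap := by
  obtain ⟨P, hP, rfl, horth⟩ := exists_monic_natDegree_eq_orthogonal_degreeLT hi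
  obtain ⟨W, hW, hWpos⟩ := exists_finrank_eq_sigPos_and_posDef
    (hankelForm L P.natDegree).toQuadraticMap
  rw [← hW, ← Submodule.finrank_map_subtype_eq]
  refine finrank_add_half_le_sigPos_hankelForm hn hP hin ?_ (Submodule.map_subtype_le _ W) ?_
  · exact orthogonal_degreeLT_of_not_nondegenerate hP hi (fun m hm hmn => hgap m hm (by lia))
      (by lia) horth
  · rintro _ ⟨f, hf, rfl⟩
    exact hWpos.nonneg ⟨f, hf⟩

theorem sigNeg_hankelForm_add_half_le (hin : i < n) (hi : (hankelForm L i).Nondegenerate)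
    (hn : (hankelForm L n).Nondegenerate)
    (hgap : ∀ m, i < m → m < n → ¬ (hankelForm L m).Nondegenerate) :
    sigNeg (hankelForm L i).toQuadraticMap + (n - i) / 2 ≤
      sigNeg (hankelForm L n).toQuadraticMap := by
  have hneg (m : ℕ) : hankelForm (-L) m = -hankelForm L m := rfl
  have hneg_iff (m : ℕ) : (hankelForm (-L) m).Nondegenerate ↔ (hankelForm L m).Nondegenerate := by
    simp [nondegenerate_hankelForm_iff]
  have h := sigPos_hankelForm_add_half_le hin ((hneg_iff i).mpr hi) ((hneg_iff n).mpr hn)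
    fun m hm hmn => mt (hneg_iff m).mp (hgap m hm hmn)
  simpa only [hneg, LinearMap.BilinMap.toQuadraticMap_neg, sigPos_neg] using h

theorem even_sigNeg_hankelForm_iff_of_sign_det_eq (hL : (hankelForm L n).Nondegenerate)
    (hsign : SignType.sign (hankelMatrix L n).det = SignType.sign (hankelMatrix L' n).det) :
    Even (sigNeg (hankelForm L n).toQuadraticMap) ↔
      Even (sigNeg (hankelForm L' n).toQuadraticMap) := by
  have hL' := (nondegenerate_hankelForm_iff_of_sign_det_eq hsign).mp hL
  rw [sign_det_hankelMatrix hL, sign_det_hankelMatrix hL'] at hsign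
  rw [← neg_one_pow_eq_one_iff_even (R := SignType) (by decide), hsign,
    neg_one_pow_eq_one_iff_even (by decide)]

theorem sigPos_hankelForm_eq_of_sign_det_eq
    (hsign : ∀ m ≤ n, SignType.sign (hankelMatrix L m).det = SignType.sign (hankelMatrix L' m).det)
    (hL : (hankelForm L n).Nondegenerate) :
    sigPos (hankelForm L n).toQuadraticMap = sigPos (hankelForm L' n).toQuadraticMap := by
  induction n using Nat.strong_induction_on with
  | _ n ih =>
  have hL' := (nondegenerate_hankelForm_iff_of_sign_det_eq (hsign n le_rfl)).mp hL
  have := sigPos_add_sigNeg_hankelForm hL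
  have := sigPos_add_sigNeg_hankelForm hL'
  rcases n.eq_zero_or_pos with rfl | hn
  · lia
  obtain ⟨i, hin, hi, hgap⟩ := exists_lt_nondegenerate_hankelForm (L := L) hn
  have hi' := (nondegenerate_hankelForm_iff_of_sign_det_eq (hsign i hin.le)).mp hi
  have hgap' : ∀ m, i < m → m < n → ¬ (hankelForm L' m).Nondegenerate := fun m hm hmn =>
    mt (nondegenerate_hankelForm_iff_of_sign_det_eq (hsign m hmn.le)).mpr (hgap m hm hmn)
  have := ih i hin (fun m hm => hsign m (hm.trans hin.le)) hi
  have := sigPos_add_sigNeg_hankelForm hi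
  have := sigPos_add_sigNeg_hankelForm hi'
  have := sigPos_hankelForm_add_half_le hin hi hL hgap
  have := sigNeg_hankelForm_add_half_le hin hi hL hgap
  have := sigPos_hankelForm_add_half_le hin hi' hL' hgap'
  have := sigNeg_hankelForm_add_half_le hin hi' hL' hgap'
  have hparity := even_sigNeg_hankelForm_iff_of_sign_det_eq hL (hsign n le_rfl)
  rw [Nat.even_iff, Nat.even_iff] at hparity
  -- The four bounds leave at most one unit to distribute, and the parity of `sigNeg` places it.
  lia

end HankelSignature

section DiagonalHankel

section Field

variable {𝕜 κ : Type*} [Field 𝕜] [Fintype κ] {L : 𝕜[X] →ₗ[𝕜] 𝕜} {w : κ → 𝕜}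
  {ℓ : κ → 𝕜[X] →ₗ[𝕜] 𝕜}

theorem not_nondegenerate_hankelForm_of_card_lt
    (hL : ∀ f g, L (f * g) = ∑ i, w i * (ℓ i f * ℓ i g)) {m : ℕ} (hm : Fintype.card κ < m) :
    ¬ (hankelForm L m).Nondegenerate := by
  intro h
  have hker : LinearMap.ker ((LinearMap.pi ℓ).domRestrict (degreeLT 𝕜 m)) ≠ ⊥ := by
    apply LinearMap.ker_ne_bot_of_finrank_lt
    simpa [Module.finrank_eq_card_basis (degreeLT.basis 𝕜 m)] using hm
  obtain ⟨f, hf, hf₀⟩ := (Submodule.ne_bot_iff _).mp hker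
  have hℓf (i : κ) : ℓ i f = 0 := congrFun hf i
  refine hf₀ (Subtype.ext (nondegenerate_hankelForm_iff.mp h f f.2 fun g _ => ?_))
  simp [hL, hℓf]

theorem exists_linearEquiv_degreeLT_apply_eq
    (hℓ : ∀ f ∈ degreeLT 𝕜 (Fintype.card κ), (∀ i, ℓ i f = 0) → f = 0) :
    ∃ e : degreeLT 𝕜 (Fintype.card κ) ≃ₗ[𝕜] (κ → 𝕜), ∀ f i, e f i = ℓ i f := by
  let φ := (LinearMap.pi ℓ).domRestrict (degreeLT 𝕜 (Fintype.card κ))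
  have hφ : Function.Injective φ := LinearMap.ker_eq_bot.mp <| LinearMap.ker_eq_bot'.mpr
    fun f hf => Subtype.ext (hℓ f f.2 fun i => congrFun hf i)
  exact ⟨LinearEquiv.ofInjectiveOfFinrankEq φ hφ
    (by simp [Module.finrank_eq_card_basis (degreeLT.basis 𝕜 (Fintype.card κ))]), fun _ _ => rfl⟩

theorem nondegenerate_hankelForm_card
    (hL : ∀ f g, L (f * g) = ∑ i, w i * (ℓ i f * ℓ i g)) (hw : ∀ i, w i ≠ 0)
    (hℓ : ∀ f ∈ degreeLT 𝕜 (Fintype.card κ), (∀ i, ℓ i f = 0) → f = 0) :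
    (hankelForm L (Fintype.card κ)).Nondegenerate := by
  classical
  obtain ⟨e, he⟩ := exists_linearEquiv_degreeLT_apply_eq hℓ
  refine nondegenerate_hankelForm_iff.mpr fun f hf hfg => hℓ f hf fun i => ?_
  have hi := hfg _ (e.symm (Pi.single i 1)).2
  simp only [hL, ← he, LinearEquiv.apply_symm_apply, Pi.single_apply, mul_ite, mul_one, mul_zero,
    Finset.sum_ite_eq', Finset.mem_univ, if_true] at hi
  exact (mul_eq_zero.mp hi).resolve_left (hw i)

end Field

theorem sigPos_sub_sigNeg_hankelForm_card {𝕜 κ : Type*} [Field 𝕜] [LinearOrder 𝕜]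
    [IsStrictOrderedRing 𝕜] [Fintype κ] {L : 𝕜[X] →ₗ[𝕜] 𝕜} {w : κ → 𝕜} {ℓ : κ → 𝕜[X] →ₗ[𝕜] 𝕜}
    (hL : ∀ f g, L (f * g) = ∑ i, w i * (ℓ i f * ℓ i g))
    (hℓ : ∀ f ∈ degreeLT 𝕜 (Fintype.card κ), (∀ i, ℓ i f = 0) → f = 0) :
    (sigPos (hankelForm L (Fintype.card κ)).toQuadraticMap : ℤ) -
      sigNeg (hankelForm L (Fintype.card κ)).toQuadraticMap = ∑ i, (SignType.sign (w i) : ℤ) := by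
  obtain ⟨e, he⟩ := exists_linearEquiv_degreeLT_apply_eq hℓ
  refine sigPos_sub_sigNeg_of_equivalent_weightedSumSquares ⟨⟨e, fun f => ?_⟩⟩
  change QuadraticMap.weightedSumSquares 𝕜 w (e f) = L (f * f)
  simp [QuadraticMap.weightedSumSquares_apply, hL, he]

end DiagonalHankel

section ConjugateNodes

open scoped ComplexConjugate

theorem sum_eq_sum_of_conj {M : Type*} [AddCommGroup M] {Z : Finset ℂ} {F G : ℂ → M}
    (hZ : ∀ z ∈ Z, conj z ∈ Z) (hreal : ∀ z ∈ Z, z.im = 0 → F z = G z)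
    (hpair : ∀ z ∈ Z, 0 < z.im → F z + F (conj z) = G z + G (conj z)) :
    ∑ z ∈ Z, F z = ∑ z ∈ Z, G z := by
  rw [← sub_eq_zero, ← Finset.sum_sub_distrib]
  refine Finset.sum_involution (fun z _ => conj z) (fun z hz => ?_)
    (fun z hz hne => ?_) hZ fun z _ => Complex.conj_conj z
  · rw [sub_add_sub_comm, sub_eq_zero]
    rcases lt_trichotomy z.im 0 with him | him | him
    · have h := hpair _ (hZ z hz) (by simpa using him)
      rwa [Complex.conj_conj, add_comm (F _), add_comm (G _)] at h
    · rw [hreal z hz him, hreal _ (hZ z hz) (by simp [him])]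
    · exact hpair z hz him
  · rw [ne_eq, Complex.conj_eq_iff_im]
    exact fun him => hne (sub_eq_zero.mpr (hreal z hz him))

/-- The coefficient at the node `z` when the quadratic form `f ↦ ∑ z, c z * f(z) ^ 2` over a
conjugation-invariant set of nodes is diagonalised: a real node keeps its weight, and a pair of
conjugate nodes contributes a hyperbolic plane. -/
noncomputable def conjWeight (c : ℂ → ℂ) (z : ℂ) : ℝ :=
  if z.im = 0 then (c z).re else if 0 < z.im then 2 else -2

/-- The linear form at the node `z` accompanying `conjWeight c z`. For `z` in the upper half plane,
`z` and its conjugate carry the real and the imaginary part of `√(c z) * f(z)`. -/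
noncomputable def conjForm (c : ℂ → ℂ) (z : ℂ) : ℝ[X] →ₗ[ℝ] ℝ :=
  let scaledEval (u z : ℂ) : ℝ[X] →ₗ[ℝ] ℂ := LinearMap.mulLeft ℝ u ∘ₗ (aeval z).toLinearMap
  if z.im = 0 then Complex.reLm ∘ₗ scaledEval 1 z
  else if 0 < z.im then Complex.reLm ∘ₗ scaledEval (c z ^ (2⁻¹ : ℂ)) z
  else Complex.imLm ∘ₗ scaledEval (c (conj z) ^ (2⁻¹ : ℂ)) (conj z)

variable {Z : Finset ℂ} {c : ℂ → ℂ} {z : ℂ}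

theorem conjForm_of_im_eq_zero (hz : z.im = 0) (f : ℝ[X]) : conjForm c z f = (aeval z f).re := by
  simp [conjForm, hz]

theorem conjForm_of_im_pos (hz : 0 < z.im) (f : ℝ[X]) :
    conjForm c z f = (c z ^ (2⁻¹ : ℂ) * aeval z f).re := by
  simp [conjForm, hz.ne', hz]

theorem conjForm_conj_of_im_pos (hz : 0 < z.im) (f : ℝ[X]) :
    conjForm c (conj z) f = (c z ^ (2⁻¹ : ℂ) * aeval z f).im := by
  simp [conjForm, hz.ne', hz.not_gt]

theorem conjWeight_of_im_eq_zero (hz : z.im = 0) : conjWeight c z = (c z).re := if_pos hz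

theorem conjWeight_of_im_pos (hz : 0 < z.im) : conjWeight c z = 2 := by
  simp [conjWeight, hz.ne', hz]

theorem conjWeight_conj_of_im_pos (hz : 0 < z.im) : conjWeight c (conj z) = -2 := by
  simp [conjWeight, hz.ne', hz.not_gt]

theorem im_aeval_eq_zero (hz : z.im = 0) (f : ℝ[X]) : (aeval z f).im = 0 := by
  rw [← Complex.conj_eq_iff_im, ← aeval_conj, Complex.conj_eq_iff_im.mpr hz]

theorem sum_conjWeight_mul_conjForm (hZ : ∀ z ∈ Z, conj z ∈ Z) (hc : ∀ z, c (conj z) = conj (c z))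
    (f g : ℝ[X]) :
    ∑ z ∈ Z, conjWeight c z * (conjForm c z f * conjForm c z g) =
      ∑ z ∈ Z, (c z * aeval z (f * g)).re := by
  refine sum_eq_sum_of_conj hZ (fun z _ him => ?_) fun z _ him => ?_
  · rw [conjWeight_of_im_eq_zero him, conjForm_of_im_eq_zero him, conjForm_of_im_eq_zero him,
      map_mul, Complex.mul_re (c z), Complex.mul_re, Complex.mul_im, im_aeval_eq_zero him,
      im_aeval_eq_zero him]
    ring
  · have hsq : c z ^ (2⁻¹ : ℂ) * c z ^ (2⁻¹ : ℂ) = c z := by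
      rw [← sq]
      exact_mod_cast Complex.cpow_nat_inv_pow (c z) two_ne_zero
    have hprod : c z * aeval z (f * g) =
        (c z ^ (2⁻¹ : ℂ) * aeval z f) * (c z ^ (2⁻¹ : ℂ) * aeval z g) := by
      rw [map_mul]
      linear_combination -(aeval z f * aeval z g) * hsq
    rw [conjWeight_of_im_pos him, conjWeight_conj_of_im_pos him, conjForm_of_im_pos him,
      conjForm_of_im_pos him, conjForm_conj_of_im_pos him, conjForm_conj_of_im_pos him, hc,
      aeval_conj, ← map_mul, Complex.conj_re, hprod, Complex.mul_re (c z ^ (2⁻¹ : ℂ) * aeval z f)]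
    ring

theorem sum_sign_conjWeight (hZ : ∀ z ∈ Z, conj z ∈ Z) :
    ∑ z ∈ Z, (SignType.sign (conjWeight c z) : ℤ) =
      ∑ z ∈ Z with z.im = 0, (SignType.sign (c z).re : ℤ) := by
  rw [Finset.sum_filter]
  refine sum_eq_sum_of_conj hZ (fun z _ him => ?_) fun z _ him => ?_
  · rw [conjWeight_of_im_eq_zero him, if_pos him]
  · rw [conjWeight_of_im_pos him, conjWeight_conj_of_im_pos him]
    simp [him.ne']

theorem conjWeight_ne_zero (hc : ∀ z, c (conj z) = conj (c z)) (hz : c z ≠ 0) :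
    conjWeight c z ≠ 0 := by
  unfold conjWeight
  split_ifs with him
  · have hcz : (c z).im = 0 := by
      rw [← Complex.conj_eq_iff_im, ← hc, Complex.conj_eq_iff_im.mpr him]
    exact fun hre => hz (Complex.ext hre hcz)
  all_goals norm_num

theorem aeval_eq_zero_of_conjForm_eq_zero {f : ℝ[X]} (hc : ∀ z, c (conj z) = conj (c z))
    (hz : c z ≠ 0) (hf : conjForm c z f = 0) (hf' : conjForm c (conj z) f = 0) :
    aeval z f = 0 := by
  have aeval_of_im_pos {z : ℂ} (him : 0 < z.im) (hz : c z ≠ 0) (hf : conjForm c z f = 0)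
      (hf' : conjForm c (conj z) f = 0) : aeval z f = 0 := by
    rw [conjForm_of_im_pos him] at hf
    rw [conjForm_conj_of_im_pos him] at hf'
    have hsqrt : c z ^ (2⁻¹ : ℂ) ≠ 0 := by simp [Complex.cpow_eq_zero_iff, hz]
    exact (mul_eq_zero.mp (Complex.ext hf hf')).resolve_left hsqrt
  rcases lt_trichotomy z.im 0 with him | him | him
  · have h := aeval_of_im_pos (z := conj z) (by simpa using him) (by simpa [hc] using hz) hf'
      (by rwa [Complex.conj_conj])
    rwa [aeval_conj, map_eq_zero] at h
  · exact Complex.ext ((conjForm_of_im_eq_zero him f).symm.trans hf) (im_aeval_eq_zero him f)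
  · exact aeval_of_im_pos him hz hf hf'

theorem eq_zero_of_conjForm_eq_zero (hZ : ∀ z ∈ Z, conj z ∈ Z) (hc : ∀ z, c (conj z) = conj (c z))
    (hcZ : ∀ z ∈ Z, c z ≠ 0) {f : ℝ[X]} (hf : f ∈ degreeLT ℝ Z.card)
    (hfZ : ∀ z ∈ Z, conjForm c z f = 0) : f = 0 := by
  have hmap : f.map (algebraMap ℝ ℂ) = 0 := by
    refine eq_zero_of_degree_lt_of_eval_finset_eq_zero Z ?_ fun z hz => ?_
    · rw [degree_map]
      exact mem_degreeLT.mp hf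
    · rw [eval_map_algebraMap]
      exact aeval_eq_zero_of_conjForm_eq_zero hc (hcZ z hz) (hfZ z hz) (hfZ _ (hZ z hz))
  exact (Polynomial.map_eq_zero _).mp hmap

end ConjugateNodes

section Hermite

open scoped ComplexConjugate

/-- The linear functional `f ↦ Tr (A * f)` on `ℝ[y]`, the trace being that of `ℝ[y] / (P)`; the
Hermite matrix of `P` and `A` is its Hankel matrix. -/
noncomputable def hermiteFunctional (P A : ℝ[X]) : ℝ[X] →ₗ[ℝ] ℝ :=
  Algebra.trace ℝ (AdjoinRoot P) ∘ₗ (AdjoinRoot.mkₐ P).toLinearMap ∘ₗ LinearMap.mulLeft ℝ A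

/-- The distinct complex roots of `P` that are not roots of `A`. -/
noncomputable def hermiteNodes (P A : ℝ[X]) : Finset ℂ :=
  {z ∈ (P.aroots ℂ).toFinset | aeval z A ≠ 0}

/-- The weight of `z` in the Hermite functional: the multiplicity of `z` as a root of `P`, times
`A(z)`. -/
noncomputable def hermiteWeight (P A : ℝ[X]) (z : ℂ) : ℂ :=
  (P.aroots ℂ).count z * aeval z A

/-- The Tarski query of `P` and `A`: the sum of the signs of `A` at the distinct real roots of
`P`. -/
noncomputable def tarskiQuery (P A : ℝ[X]) : ℤ :=
  ∑ t ∈ P.roots.toFinset, (SignType.sign (A.eval t) : ℤ)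

variable {P A : ℝ[X]}

theorem count_aroots_conj (z : ℂ) :
    (P.aroots ℂ).count (conj z) = (P.aroots ℂ).count z := by
  have hmap : (P.map (algebraMap ℝ ℂ)).map (starRingEnd ℂ) = P.map (algebraMap ℝ ℂ) := by
    rw [Polynomial.map_map]
    congr 1
    ext x
    simp
  rw [count_roots, count_roots, eq_rootMultiplicity_map (starRingEnd ℂ).injective z, hmap]

theorem hermiteWeight_conj (z : ℂ) : hermiteWeight P A (conj z) = conj (hermiteWeight P A z) := by
  rw [hermiteWeight, hermiteWeight, count_aroots_conj, aeval_conj, map_mul, map_natCast]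

theorem hermiteWeight_ne_zero {z : ℂ} (hz : z ∈ hermiteNodes P A) : hermiteWeight P A z ≠ 0 := by
  obtain ⟨hroot, hA⟩ := Finset.mem_filter.mp hz
  have hcount := Multiset.count_ne_zero.mpr (Multiset.mem_toFinset.mp hroot)
  exact mul_ne_zero (Nat.cast_ne_zero.mpr hcount) hA

theorem conj_mem_hermiteNodes {z : ℂ} (hz : z ∈ hermiteNodes P A) :
    conj z ∈ hermiteNodes P A := by
  simpa [hermiteNodes, aeval_conj] using hz

theorem card_hermiteNodes_le : (hermiteNodes P A).card ≤ P.natDegree :=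
  calc (hermiteNodes P A).card ≤ (P.aroots ℂ).toFinset.card := Finset.card_filter_le _ _
    _ ≤ (P.aroots ℂ).card := Multiset.toFinset_card_le _
    _ ≤ P.natDegree := by simpa using card_roots' (P.map (algebraMap ℝ ℂ))

theorem hermiteFunctional_eq_sum (hP : P ≠ 0) (f : ℝ[X]) :
    hermiteFunctional P A f = ∑ z ∈ hermiteNodes P A, (hermiteWeight P A z * aeval z f).re := by
  rw [← Complex.re_sum, ← Complex.ofReal_re (hermiteFunctional P A f)]
  congr 1
  rw [hermiteNodes, Finset.sum_filter_of_ne]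
  · refine (algebraMap_trace_adjoinRoot_mk hP (A * f)).trans ?_
    rw [Finset.sum_multiset_map_count]
    simp [hermiteWeight, mul_assoc]
  · rintro z - hz hA
    simp [hermiteWeight, hA] at hz

theorem hermiteFunctional_mul (hP : P ≠ 0) (f g : ℝ[X]) :
    hermiteFunctional P A (f * g) = ∑ z : hermiteNodes P A,
      conjWeight (hermiteWeight P A) z *
        (conjForm (hermiteWeight P A) z f * conjForm (hermiteWeight P A) z g) := by
  rw [hermiteFunctional_eq_sum hP, Finset.sum_coe_sort (hermiteNodes P A) fun z =>
    conjWeight (hermiteWeight P A) z *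
      (conjForm (hermiteWeight P A) z f * conjForm (hermiteWeight P A) z g)]
  exact (sum_conjWeight_mul_conjForm (fun _ => conj_mem_hermiteNodes) hermiteWeight_conj f g).symm

theorem eq_zero_of_conjForm_hermiteWeight_eq_zero (f : ℝ[X])
    (hf : f ∈ degreeLT ℝ (Fintype.card (hermiteNodes P A)))
    (hf₀ : ∀ z : hermiteNodes P A, conjForm (hermiteWeight P A) z f = 0) : f = 0 := by
  rw [Fintype.card_coe] at hf
  exact eq_zero_of_conjForm_eq_zero (fun _ => conj_mem_hermiteNodes) hermiteWeight_conj
    (fun _ => hermiteWeight_ne_zero) hf fun z hz => hf₀ ⟨z, hz⟩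

theorem not_nondegenerate_hankelForm_hermiteFunctional (hP : P ≠ 0) {m : ℕ}
    (hm : (hermiteNodes P A).card < m) :
    ¬ (hankelForm (hermiteFunctional P A) m).Nondegenerate :=
  not_nondegenerate_hankelForm_of_card_lt (hermiteFunctional_mul hP) (by simpa using hm)

theorem nondegenerate_hankelForm_hermiteFunctional (hP : P ≠ 0) :
    (hankelForm (hermiteFunctional P A) (hermiteNodes P A).card).Nondegenerate := by
  rw [← Fintype.card_coe]
  exact nondegenerate_hankelForm_card (hermiteFunctional_mul hP)
    (fun z => conjWeight_ne_zero hermiteWeight_conj (hermiteWeight_ne_zero z.2))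
    eq_zero_of_conjForm_hermiteWeight_eq_zero

theorem ofReal_mem_hermiteNodes {t : ℝ} :
    (t : ℂ) ∈ hermiteNodes P A ↔ t ∈ P.roots ∧ A.eval t ≠ 0 := by
  simp [hermiteNodes, ← Complex.coe_algebraMap, aeval_algebraMap_apply_eq_algebraMap_eval]

theorem sign_re_hermiteWeight_ofReal {t : ℝ} (ht : (t : ℂ) ∈ hermiteNodes P A) :
    SignType.sign (hermiteWeight P A t).re = SignType.sign (A.eval t) := by
  have hcount : 0 < (P.aroots ℂ).count (t : ℂ) :=
    Multiset.count_pos.mpr (Multiset.mem_toFinset.mp (Finset.mem_filter.mp ht).1)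
  have hre : (hermiteWeight P A t).re = (P.aroots ℂ).count (t : ℂ) * A.eval t := by
    rw [hermiteWeight, ← Complex.coe_algebraMap, aeval_algebraMap_apply_eq_algebraMap_eval]
    simp
  rw [hre, sign_mul, sign_pos (Nat.cast_pos.mpr hcount), one_mul]

theorem tarskiQuery_eq_sum_hermiteNodes :
    tarskiQuery P A =
      ∑ z ∈ hermiteNodes P A with z.im = 0, (SignType.sign (hermiteWeight P A z).re : ℤ) := by
  have hreal : {z ∈ hermiteNodes P A | z.im = 0} =
      {t ∈ P.roots.toFinset | A.eval t ≠ 0}.map ⟨Complex.ofReal, Complex.ofReal_injective⟩ := by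
    ext z
    simp only [Finset.mem_filter, Finset.mem_map, Multiset.mem_toFinset,
      Function.Embedding.coeFn_mk]
    constructor
    · rintro ⟨hz, him⟩
      obtain ⟨t, rfl⟩ : ∃ t : ℝ, (t : ℂ) = z := ⟨z.re, Complex.ext rfl him.symm⟩
      exact ⟨t, ofReal_mem_hermiteNodes.mp hz, rfl⟩
    · rintro ⟨t, ht, rfl⟩
      exact ⟨ofReal_mem_hermiteNodes.mpr ht, Complex.ofReal_im t⟩
  rw [hreal, Finset.sum_map, tarskiQuery, ← Finset.sum_filter_of_ne (p := fun t => A.eval t ≠ 0)]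
  · refine Finset.sum_congr rfl fun t ht => ?_
    rw [Finset.mem_filter, Multiset.mem_toFinset] at ht
    exact congrArg _ (sign_re_hermiteWeight_ofReal (ofReal_mem_hermiteNodes.mpr ht)).symm
  · intro t _ hsign hA
    simp [hA] at hsign

theorem sigPos_sub_sigNeg_hankelForm_hermiteFunctional (hP : P ≠ 0) :
    (sigPos (hankelForm (hermiteFunctional P A) (hermiteNodes P A).card).toQuadraticMap : ℤ) -
      sigNeg (hankelForm (hermiteFunctional P A) (hermiteNodes P A).card).toQuadraticMap =
        tarskiQuery P A := by
  rw [tarskiQuery_eq_sum_hermiteNodes, ← sum_sign_conjWeight fun _ => conj_mem_hermiteNodes,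
    ← Finset.sum_coe_sort, ← Fintype.card_coe]
  exact sigPos_sub_sigNeg_hankelForm_card (hermiteFunctional_mul hP)
    eq_zero_of_conjForm_hermiteWeight_eq_zero

theorem tarskiQuery_eq_of_sign_det_hankelMatrix_eq {P' A' : ℝ[X]} (hP : P ≠ 0) (hP' : P' ≠ 0)
    {p : ℕ} (hp : P.natDegree ≤ p) (hp' : P'.natDegree ≤ p)
    (hsign : ∀ m ≤ p, SignType.sign (hankelMatrix (hermiteFunctional P A) m).det =
      SignType.sign (hankelMatrix (hermiteFunctional P' A') m).det) :
    tarskiQuery P A = tarskiQuery P' A' := by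
  have hnondeg := nondegenerate_hankelForm_hermiteFunctional (A := A) hP
  have hnondeg' := nondegenerate_hankelForm_hermiteFunctional (A := A') hP'
  have hle : (hermiteNodes P A).card ≤ p := card_hermiteNodes_le.trans hp
  have hle' : (hermiteNodes P' A').card ≤ p := card_hermiteNodes_le.trans hp'
  have hcard : (hermiteNodes P A).card = (hermiteNodes P' A').card := by
    refine le_antisymm (not_lt.mp fun h => ?_) (not_lt.mp fun h => ?_)
    · exact not_nondegenerate_hankelForm_hermiteFunctional hP' h (
        (nondegenerate_hankelForm_iff_of_sign_det_eq (hsign _ hle) |>.mp hnondeg))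
    · exact not_nondegenerate_hankelForm_hermiteFunctional hP h
        (nondegenerate_hankelForm_iff_of_sign_det_eq (hsign _ hle') |>.mpr hnondeg')
  have hsigPos := sigPos_hankelForm_eq_of_sign_det_eq (fun m hm => hsign m (hm.trans hle)) hnondeg
  have hsum := sigPos_add_sigNeg_hankelForm hnondeg
  have hsum' := sigPos_add_sigNeg_hankelForm hnondeg'
  rw [← sigPos_sub_sigNeg_hankelForm_hermiteFunctional hP,
    ← sigPos_sub_sigNeg_hankelForm_hermiteFunctional hP']
  rw [hcard] at hsigPos hsum ⊢
  lia

end Hermite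

section ThomEncoding

open scoped Finset

/-- The polynomials whose signs at a root of `P` are sought: `Q` in position `0`, followed by the
derivatives of `P`. -/
noncomputable def signFamily (P Q : ℝ[X]) (k : ℕ) : ℝ[X] :=
  if k = 0 then Q else derivative^[k] P

/-- The sign of `Q` at `t`, followed by the Thom encoding of `t` as a root of a polynomial `P` of
degree `p`. -/
noncomputable def signVector (p : ℕ) (P Q : ℝ[X]) (t : ℝ) (i : Fin p) : SignType :=
  SignType.sign ((signFamily P Q i).eval t)

variable {p : ℕ} {P Q P₁ Q₁ P₂ Q₂ : ℝ[X]}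

theorem sgn_eq_sign (a : ℝ) : sgn a = (SignType.sign a : ℤ) := by
  unfold sgn
  rcases lt_trichotomy a 0 with h | rfl | h
  · simp [h]
  · simp
  · simp [h, h.not_gt, h.ne']

theorem sgn_eq_sgn_iff {a b : ℝ} : sgn a = sgn b ↔ SignType.sign a = SignType.sign b := by
  rw [sgn_eq_sign, sgn_eq_sign]
  generalize SignType.sign a = x, SignType.sign b = y
  revert x y
  decide

theorem le_bit_of_two_pow_le {k : ℕ} (h : 2 ^ k ≤ 2 * p) : k ≤ bit p := by
  have hp : p ≠ 0 := by
    rintro rfl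
    simp at h
  rw [bit, if_neg hp, ← Nat.log_mul_base one_lt_two hp, mul_comm]
  exact Nat.le_log_of_pow_le one_lt_two h

theorem pMinor_HerMat_eq_det_hankelMatrix (A : ℝ[X]) {m : ℕ} (h : m ≤ p) :
    pMinor p (HerMat p P A) m h = (hankelMatrix (hermiteFunctional P A) m).det := rfl

theorem pderProd_eq_prod_signFamily (hp : 1 ≤ p) (β : ℕ → ℕ) :
    pderProd p P Q β (β 0) = ∏ k ∈ Finset.range p, signFamily P Q k ^ β k := by
  have hmin : ¬ IsMin p := by simpa using Nat.ne_of_gt hp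
  rw [pderProd, Finset.Icc_sub_one_right_eq_Ico_of_not_isMin hmin,
    Finset.prod_range_eq_mul_Ico _ hp, mul_comm]
  congr 1
  refine Finset.prod_congr rfl fun k hk => ?_
  rw [signFamily, if_neg (Nat.ne_of_gt (Finset.mem_Ico.mp hk).1)]

theorem admissible_of_card_le (hp : 1 ≤ p) {β : ℕ → ℕ} (hβ : ∀ k, β k ≤ 2)
    (hcard : #{k ∈ Finset.range p | β k ≠ 0} ≤ bit p) : admissible p β (β 0) := by
  refine ⟨hβ, hβ 0, le_of_eq_of_le ?_ hcard⟩
  have hmin : ¬ IsMin p := by simpa using Nat.ne_of_gt hp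
  rw [Finset.card_filter, Finset.card_filter, Finset.Icc_sub_one_right_eq_Ico_of_not_isMin hmin,
    Finset.sum_range_eq_add_Ico _ hp, add_comm]
  simp

theorem tarskiQuery_prod_signFamily (β : ℕ → ℕ) :
    tarskiQuery P (∏ k ∈ Finset.range p, signFamily P Q k ^ β k) =
      ∑ t ∈ P.roots.toFinset, ∏ i, (signVector p P Q t i : ℤ) ^ β i := by
  refine Finset.sum_congr rfl fun t _ => ?_
  rw [eval_prod, ← signHom_apply, map_prod, ← SignType.castHom_apply, map_prod,
    ← Fin.prod_univ_eq_prod_range]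
  simp [signVector, sign_pow]

theorem image_signVector_eq_of_tarskiQuery_eq (hp : 1 ≤ p) (h₁ : P₁.natDegree ≤ p)
    (h₂ : P₂.natDegree ≤ p)
    (htarski : ∀ β : ℕ → ℕ, admissible p β (β 0) →
      tarskiQuery P₁ (pderProd p P₁ Q₁ β (β 0)) = tarskiQuery P₂ (pderProd p P₂ Q₂ β (β 0))) :
    P₁.roots.toFinset.image (signVector p P₁ Q₁) =
      P₂.roots.toFinset.image (signVector p P₂ Q₂) := by
  have hroots {P : ℝ[X]} (hP : P.natDegree ≤ p) : #P.roots.toFinset ≤ p :=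
    (Multiset.toFinset_card_le _).trans ((card_roots' P).trans hP)
  refine image_eq_image_of_sum_prod_sign_eq _ _ _ _ fun α hα hcard => ?_
  obtain ⟨β, hβ, rfl⟩ : ∃ β : ℕ → ℕ, (∀ k, β k ≤ 2) ∧ (fun i : Fin p => β i) = α := by
    refine ⟨fun k => if hk : k < p then α ⟨k, hk⟩ else 0, fun k => ?_, by simp⟩
    dsimp only
    split_ifs with hk
    · exact hα ⟨k, hk⟩
    · exact zero_le_two
  rw [← tarskiQuery_prod_signFamily, ← tarskiQuery_prod_signFamily,
    ← pderProd_eq_prod_signFamily hp, ← pderProd_eq_prod_signFamily hp]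
  refine htarski β (admissible_of_card_le hp hβ (le_bit_of_two_pow_le ?_))
  have hsupp : #{i : Fin p | β i ≠ 0} = #{k ∈ Finset.range p | β k ≠ 0} := by
    rw [Finset.card_filter, Finset.card_filter,
      Fin.sum_univ_eq_sum_range fun k => if β k ≠ 0 then 1 else 0]
  have := hroots h₁
  have := hroots h₂
  rw [← hsupp]
  lia

theorem exists_root_sgn_iff_exists_mem_image_signVector (hp : 1 ≤ p) (hP : P ≠ 0) (η : ℕ → ℤ)
    (s : ℤ) :
    (∃ θ : ℝ, P.eval θ = 0 ∧
        (∀ k, 1 ≤ k → k ≤ p - 1 → sgn ((derivative^[k] P).eval θ) = η k) ∧ sgn (Q.eval θ) = s) ↔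
      ∃ x ∈ P.roots.toFinset.image (signVector p P Q),
        ∀ i, (x i : ℤ) = if i.val = 0 then s else η i := by
  simp only [Finset.exists_mem_image, Multiset.mem_toFinset, mem_roots hP, IsRoot]
  refine exists_congr fun θ => and_congr_right fun _ => ⟨fun ⟨hη, hs⟩ i => ?_, fun h => ⟨?_, ?_⟩⟩
  · rw [signVector, ← sgn_eq_sign, signFamily]
    split_ifs with hi
    · exact hs
    · exact hη i (by lia) (by lia)
  · intro k hk hkp
    have hk₀ : k ≠ 0 := by lia
    simpa [signVector, signFamily, hk₀, sgn_eq_sign] using h ⟨k, by lia⟩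
  · simpa [signVector, signFamily, sgn_eq_sign] using h ⟨0, hp⟩

end ThomEncoding

/-- Corollary 2.13: the signs of all principal minors of the Hermite matrices `Her(P; A)`, for
all products `A` of at most `bit p` of the derivatives `P', …, P^{(p-1)}`, each raised to the
power `1` or `2`, optionally multiplied by `Q` or `Q²`, determine the Thom encoding of each real
root of `P` and the sign of `Q` at each such root: if two pairs `(P₁, Q₁)`, `(P₂, Q₂)` of degree
`p` give the same sign data, they realize the same pairs (Thom encoding, sign of `Q`). -/
theorem minors_determine_thom_and_sign (p : ℕ) (hp : 1 ≤ p) (P₁ Q₁ P₂ Q₂ : Polynomial ℝ)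
    (h₁ : P₁.natDegree = p) (h₂ : P₂.natDegree = p)
    (hdata : ∀ (α : ℕ → ℕ) (b : ℕ), admissible p α b → ∀ (m : ℕ) (h : m ≤ p),
      sgn (pMinor p (HerMat p P₁ (pderProd p P₁ Q₁ α b)) m h) =
      sgn (pMinor p (HerMat p P₂ (pderProd p P₂ Q₂ α b)) m h)) :
    ∀ (η : ℕ → ℤ) (s : ℤ),
      (∃ θ : ℝ, P₁.eval θ = 0 ∧
          (∀ k, 1 ≤ k → k ≤ p - 1 → sgn ((Polynomial.derivative^[k] P₁).eval θ) = η k) ∧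
          sgn (Q₁.eval θ) = s) ↔
      (∃ θ : ℝ, P₂.eval θ = 0 ∧
          (∀ k, 1 ≤ k → k ≤ p - 1 → sgn ((Polynomial.derivative^[k] P₂).eval θ) = η k) ∧
          sgn (Q₂.eval θ) = s) := by
  intro η s
  have hP₁ : P₁ ≠ 0 := ne_zero_of_natDegree_gt (h₁ ▸ hp)
  have hP₂ : P₂ ≠ 0 := ne_zero_of_natDegree_gt (h₂ ▸ hp)
  have htarski (β : ℕ → ℕ) (hβ : admissible p β (β 0)) :
      tarskiQuery P₁ (pderProd p P₁ Q₁ β (β 0)) = tarskiQuery P₂ (pderProd p P₂ Q₂ β (β 0)) :=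
    tarskiQuery_eq_of_sign_det_hankelMatrix_eq hP₁ hP₂ h₁.le h₂.le fun m hm =>
      by simpa only [pMinor_HerMat_eq_det_hankelMatrix, sgn_eq_sgn_iff] using hdata β (β 0) hβ m hm
  rw [exists_root_sgn_iff_exists_mem_image_signVector hp hP₁,
    exists_root_sgn_iff_exists_mem_image_signVector hp hP₂,
    image_signVector_eq_of_tarskiQuery_eq hp h₁.le h₂.le htarski]
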